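/- Let β > 1 and let G be the induced subgraph on the largest connected component of the Erdős–Rényi graph on [N] with parameter β. Then the Cheeger constant satisfies Φ(G) = Ω_P(1/log^2 N): there exists c > 0 such that, with probability tending to 1 as N → ∞, Φ(G) ≥ c/log^2 N. -/

import Mathlib

open scoped Classical
open Filter

noncomputable section

/-- Probability weight of a given simple graph on `[N]` when each edge `{i,j}` (`i ≠ j`)
is present independently with probability `p i j` (indices 1-based). -/
def graphWeight (p : ℕ → ℕ → ℝ) (N : ℕ) (G : SimpleGraph (Fin N)) : ℝ :=
  ∏ i : Fin N, ∏ j : Fin N,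
    if i < j then
      (if G.Adj i j then p ((i : ℕ) + 1) ((j : ℕ) + 1)
       else 1 - p ((i : ℕ) + 1) ((j : ℕ) + 1))
    else 1

/-- Probability that the random graph with independent edge probabilities `p` satisfies the
property `A`. -/
def graphProb (p : ℕ → ℕ → ℝ) (N : ℕ) (A : SimpleGraph (Fin N) → Prop) : ℝ :=
  ∑ G : SimpleGraph (Fin N), if A G then graphWeight p N G else 0

/-- Probability that the Erdős–Rényi graph on `[N]` with edge probability `β/N` satisfies the
property `A`. -/
def erProb (β : ℝ) (N : ℕ) (A : SimpleGraph (Fin N) → Prop) : ℝ :=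
  graphProb (fun _ _ => β / (N : ℝ)) N A

/-- `e(S : Sᶜ)`: the number of edges of `G` with one endpoint in `S` and one in `Sᶜ`. -/
def crossCount {V : Type*} [Fintype V] [DecidableEq V] (G : SimpleGraph V)
    (S : Finset V) : ℕ :=
  ∑ i ∈ S, ∑ j ∈ Sᶜ, if G.Adj i j then 1 else 0

/-- The Cheeger constant `Φ(G) = min {e(S:Sᶜ)/|S| : ∅ ≠ S, |S| ≤ |V|/2}`. -/
def cheegerConst {V : Type*} [Fintype V] [DecidableEq V] (G : SimpleGraph V) : ℝ :=
  sInf {r : ℝ | ∃ S : Finset V, S.Nonempty ∧ 2 * S.card ≤ Fintype.card V ∧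
    r = (crossCount G S : ℝ) / (S.card : ℝ)}

/-- Number of vertices of the connected component of `v` in `G`. -/
def compCard {N : ℕ} (G : SimpleGraph (Fin N)) (v : Fin N) : ℕ :=
  Fintype.card {w : Fin N // G.Reachable v w}


abbrev Om (N : ℕ) := Sym2 (Fin N) → Bool

def bw (p : ℝ) (b : Bool) : ℝ := if b then p else 1 - p

def Wt {N : ℕ} (p : ℝ) (ω : Om N) : ℝ := ∏ e, bw p (ω e)

def Ex {N : ℕ} (p : ℝ) (F : Om N → ℝ) : ℝ := ∑ ω, Wt p ω * F ω

def ind (A : Prop) : ℝ := if A then 1 else 0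

def gr {N : ℕ} (ω : Om N) : SimpleGraph (Fin N) where
  Adj i j := i ≠ j ∧ ω s(i, j) = true
  symm := ⟨fun i j h => ⟨h.1.symm, by rw [Sym2.eq_swap]; exact h.2⟩⟩
  loopless := ⟨fun i h => h.1 rfl⟩

lemma bw_sum (p : ℝ) : ∑ b, bw p b = 1 := by simp [bw]

lemma sum_prod_bool {N : ℕ} (g : Sym2 (Fin N) → Bool → ℝ) :
    ∑ ω : Om N, ∏ e, g e (ω e) = ∏ e, ∑ b, g e b := by
  rw [Finset.prod_univ_sum]
  rw [Fintype.piFinset_univ]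

lemma Ex_prod {N : ℕ} (p : ℝ) (g : Sym2 (Fin N) → Bool → ℝ) :
    Ex p (fun ω => ∏ e, g e (ω e)) = ∏ e, (p * g e true + (1 - p) * g e false) := by
  unfold Ex Wt
  simp_rw [← Finset.prod_mul_distrib]
  rw [sum_prod_bool (fun e b => bw p b * g e b)]
  simp [bw]

lemma Ex_one {N : ℕ} (p : ℝ) : Ex p (fun _ : Om N => (1 : ℝ)) = 1 := by
  have := Ex_prod (N := N) p (fun _ _ => 1)
  simpa using this

lemma Wt_nonneg {N : ℕ} {p : ℝ} (h0 : 0 ≤ p) (h1 : p ≤ 1) (ω : Om N) : 0 ≤ Wt p ω := by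
  unfold Wt bw
  refine Finset.prod_nonneg fun e _ => ?_
  split_ifs <;> linarith

lemma Ex_mono {N : ℕ} {p : ℝ} (h0 : 0 ≤ p) (h1 : p ≤ 1) {F G : Om N → ℝ}
    (h : ∀ ω, F ω ≤ G ω) : Ex p F ≤ Ex p G :=
  Finset.sum_le_sum fun ω _ => mul_le_mul_of_nonneg_left (h ω) (Wt_nonneg h0 h1 ω)

lemma Ex_add {N : ℕ} (p : ℝ) (F G : Om N → ℝ) :
    Ex p (fun ω => F ω + G ω) = Ex p F + Ex p G := by
  simp [Ex, mul_add, Finset.sum_add_distrib]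

lemma Ex_sum {N : ℕ} {ι : Type*} (p : ℝ) (s : Finset ι) (F : ι → Om N → ℝ) :
    Ex p (fun ω => ∑ i ∈ s, F i ω) = ∑ i ∈ s, Ex p (F i) := by
  simp only [Ex, Finset.mul_sum]
  rw [Finset.sum_comm]

lemma Ex_const_mul {N : ℕ} (p c : ℝ) (F : Om N → ℝ) :
    Ex p (fun ω => c * F ω) = c * Ex p F := by
  simp only [Ex, Finset.mul_sum]
  exact Finset.sum_congr rfl fun _ _ => by ring

lemma Ex_const {N : ℕ} (p c : ℝ) : Ex p (fun _ : Om N => c) = c := by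
  have := Ex_const_mul (N := N) p c (fun _ => 1)
  simpa [Ex_one] using this

lemma ind_nonneg (A : Prop) : 0 ≤ ind A := by unfold ind; split_ifs <;> norm_num

lemma ind_le_one (A : Prop) : ind A ≤ 1 := by unfold ind; split_ifs <;> norm_num

lemma ind_true {A : Prop} (h : A) : ind A = 1 := if_pos h

lemma ind_le {A : Prop} {x : ℝ} (hx : 0 ≤ x) (h : A → 1 ≤ x) : ind A ≤ x := by
  unfold ind; split_ifs with hA
  · exact h hA
  · exact hx

lemma ind_mono {A B : Prop} (h : A → B) : ind A ≤ ind B :=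
  ind_le (ind_nonneg B) fun hA => (ind_true (h hA)).ge

lemma Pr_union {N : ℕ} {ι : Type*} {p : ℝ} (h0 : 0 ≤ p) (h1 : p ≤ 1) (s : Finset ι)
    (A : Om N → Prop) (B : ι → Om N → Prop) (h : ∀ ω, A ω → ∃ i ∈ s, B i ω) :
    Ex p (fun ω => ind (A ω)) ≤ ∑ i ∈ s, Ex p (fun ω => ind (B i ω)) := by
  rw [← Ex_sum]
  refine Ex_mono h0 h1 fun ω => ind_le (Finset.sum_nonneg fun _ _ => ind_nonneg _) fun hA => ?_
  obtain ⟨i, hi, hB⟩ := h ω hA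
  rw [← ind_true hB]
  exact Finset.single_le_sum (f := fun i => ind (B i ω)) (fun _ _ => ind_nonneg _) hi

lemma ex_fiber {N : ℕ} (p : ℝ) (G : SimpleGraph (Fin N)) :
    Ex p (fun ω : Om N => ind (gr ω = G)) = graphWeight (fun _ _ => p) N G := by
  have h1 : ∀ ω : Om N, ind (gr ω = G) =
      ∏ e : Sym2 (Fin N), (if e.IsDiag then 1 else ind (ω e = true ↔ e ∈ G.edgeSet)) := by
    intro ω
    by_cases h : gr ω = G
    · rw [ind_true h]
      symm
      refine Finset.prod_eq_one fun e _ => ?_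
      split_ifs with hd
      · rfl
      · refine ind_true ?_
        subst h
        induction e with
        | _ i j =>
          simp at hd
          simp [gr, hd]
    · have : ∃ e : Sym2 (Fin N), ¬ e.IsDiag ∧ ¬ (ω e = true ↔ e ∈ G.edgeSet) := by
        by_contra hcon
        push Not at hcon
        apply h
        ext i j
        by_cases hij : i = j
        · subst hij; simp
        · have := hcon s(i, j) (by simpa using hij)
          simp only [SimpleGraph.mem_edgeSet] at this
          rw [← this]
          simp [gr, hij]
      obtain ⟨e, he1, he2⟩ := this
      rw [Finset.prod_eq_zero (Finset.mem_univ e) (by simp only [if_neg he1]; exact if_neg he2)]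
      exact if_neg h
  simp_rw [h1]
  rw [Ex_prod p (fun e b => if e.IsDiag then 1 else ind (b = true ↔ e ∈ G.edgeSet))]
  have h2 : ∀ e : Sym2 (Fin N), (p * (if e.IsDiag then 1 else ind (true = true ↔ e ∈ G.edgeSet))
      + (1 - p) * (if e.IsDiag then 1 else ind (false = true ↔ e ∈ G.edgeSet))) =
      if ¬ e.IsDiag then (if e ∈ G.edgeSet then p else 1 - p) else 1 := by
    intro e
    by_cases hd : e.IsDiag <;> by_cases he : e ∈ G.edgeSet <;> simp [hd, he, ind]
  rw [Finset.prod_congr rfl (fun e _ => h2 e)]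
  rw [← Finset.prod_filter]
  unfold graphWeight
  have h3 := congrArg Additive.toMul (Finset.sum_sym2_filter_not_isDiag (M := Additive ℝ)
    (Finset.univ : Finset (Fin N))
    (fun e => Additive.ofMul (if e ∈ G.edgeSet then p else 1 - p)))
  simp only [toMul_sum, toMul_ofMul] at h3
  rw [Finset.sym2_univ] at h3
  rw [← Finset.prod_product' (f := fun i j : Fin N => if i < j then
      (if G.Adj i j then p else 1 - p) else 1)]
  rw [← Finset.prod_filter]
  trans (∏ i ∈ (Finset.univ : Finset (Fin N)).offDiag with i.1 < i.2,
    if s(i.1, i.2) ∈ G.edgeSet then p else 1 - p)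
  · rw [← h3]
  · apply Finset.prod_congr
    · ext ⟨i, j⟩
      simp
      intro h; exact h.ne
    · intros; rfl

lemma erProb_eq (β : ℝ) (N : ℕ) (A : SimpleGraph (Fin N) → Prop) :
    erProb β N A = Ex (β / N) (fun ω => ind (A (gr ω))) := by
  unfold erProb graphProb
  have : ∀ ω : Om N, ind (A (gr ω)) = ∑ G, ind (A G) * ind (gr ω = G) := by
    intro ω
    rw [Finset.sum_eq_single (gr ω)]
    · simp [ind]
    · intro b _ hb; simp [ind, hb.symm]
    · simp
  simp_rw [this]
  rw [Ex_sum]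
  refine Finset.sum_congr rfl fun G _ => ?_
  rw [Ex_const_mul, ex_fiber]
  unfold ind
  split_ifs <;> simp

lemma sprinkle {N : ℕ} {p p' q : ℝ} (hp : 1 - p = (1 - p') * (1 - q)) (F : Om N → ℝ) :
    Ex p F = Ex p' (fun ω' => Ex q (fun ω'' => F (fun e => ω' e || ω'' e))) := by
  have key : ∀ ω : Om N, Ex p' (fun ω' => Ex q (fun ω'' =>
      ind (ω = fun e => ω' e || ω'' e))) = Wt p ω := by
    intro ω
    have : ∀ ω' ω'' : Om N, ind (ω = fun e => ω' e || ω'' e) =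
        ∏ e, ind (ω e = (ω' e || ω'' e)) := by
      intro ω' ω''
      by_cases h : ω = fun e => ω' e || ω'' e
      · rw [ind_true h, Finset.prod_eq_one]
        intro e _
        exact ind_true (congrFun h e)
      · obtain ⟨e, he⟩ := Function.ne_iff.mp h
        rw [Finset.prod_eq_zero (Finset.mem_univ e) (if_neg he)]
        exact if_neg h
    simp_rw [this]
    have h2 : ∀ ω' : Om N, Ex q (fun ω'' => ∏ e, ind (ω e = (ω' e || ω'' e))) =
        ∏ e, (q * ind (ω e = (ω' e || true)) + (1 - q) * ind (ω e = (ω' e || false))) :=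
      fun ω' => Ex_prod q (fun e b => ind (ω e = (ω' e || b)))
    simp_rw [h2]
    rw [Ex_prod p' (fun e b => (q * ind (ω e = (b || true)) + (1 - q) * ind (ω e = (b || false))))]
    unfold Wt
    refine Finset.prod_congr rfl fun e _ => ?_
    cases ω e <;> simp [ind, bw] <;> linarith
  have h1 : ∀ ω₀ : Om N, F ω₀ = ∑ ω, F ω * ind (ω = ω₀) := by
    intro ω₀
    rw [Finset.sum_eq_single ω₀]
    · simp [ind]
    · intro b _ hb; simp [ind, hb]
    · simp
  have h2 : ∀ ω' ω'' : Om N, F (fun e => ω' e || ω'' e) =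
      ∑ ω, F ω * ind (ω = (fun e => ω' e || ω'' e)) := fun _ _ => h1 _
  simp_rw [h2, Ex_sum, Ex_const_mul, key]
  unfold Ex
  exact Finset.sum_congr rfl fun _ _ => mul_comm _ _


lemma chernoff {N : ℕ} {p z : ℝ} (h0 : 0 ≤ p) (h1 : p ≤ 1) (hz : 0 < z) (hz1 : z ≤ 1)
    (F D : Finset (Sym2 (Fin N))) (hFD : Disjoint F D) (κ : ℝ) :
    Ex p (fun ω => ind ((∀ e ∈ F, ω e = true) ∧ ((D.filter (fun e => ω e = true)).card : ℝ) ≤ κ))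
      ≤ z ^ (-κ) * (p ^ F.card * (1 - p * (1 - z)) ^ D.card) := by
  let g : Sym2 (Fin N) → Bool → ℝ := fun e b =>
    (if e ∈ F then (if b then 1 else 0) else 1) * (if e ∈ D then (if b then z else 1) else 1)
  have hg : ∀ e b, 0 ≤ g e b := by
    intro e b
    simp only [g]
    split_ifs <;> simp [hz.le]
  have hA : Ex p (fun ω => z ^ (-κ) * ∏ e, g e (ω e)) =
      z ^ (-κ) * (p ^ F.card * (1 - p * (1 - z)) ^ D.card) := by
    rw [Ex_const_mul, Ex_prod]
    congr 1
    have : ∀ e, p * g e true + (1 - p) * g e false =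
        (if e ∈ F then p else 1) * (if e ∈ D then 1 - p * (1 - z) else 1) := by
      intro e
      by_cases hF : e ∈ F
      · have hD : e ∉ D := Finset.disjoint_left.mp hFD hF
        simp [g, hF, hD]
      · by_cases hD : e ∈ D
        · simp [g, hF, hD]; ring
        · simp [g, hF, hD]
    simp_rw [this, Finset.prod_mul_distrib]
    simp
  rw [← hA]
  refine Ex_mono h0 h1 fun ω => ind_le ?_ ?_
  · exact mul_nonneg (Real.rpow_nonneg hz.le _) (Finset.prod_nonneg fun e _ => hg e _)
  · rintro ⟨hF, hD⟩
    have : ∏ e, g e (ω e) = z ^ ((D.filter (fun e => ω e = true)).card : ℝ) := by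
      simp only [g, Finset.prod_mul_distrib]
      rw [Finset.prod_eq_one, one_mul]
      · rw [Finset.prod_ite_mem, Finset.univ_inter, ← Finset.prod_filter, Finset.prod_const,
          Real.rpow_natCast]
      · intro e _
        split_ifs with h1 h2 <;> simp_all
    rw [this, ← Real.rpow_add hz]
    exact Real.one_le_rpow_of_pos_of_le_one_of_nonpos hz hz1 (by linarith)

lemma upper_tail {N : ℕ} {q : ℝ} (h0 : 0 ≤ q) (h1 : q ≤ 1) (κ : ℝ) :
    Ex q (fun ω : Om N => ind (κ < ((Finset.univ.filter (fun e => ω e = true)).card : ℝ)))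
      ≤ 2 ^ (-κ) * (1 + q) ^ (Fintype.card (Sym2 (Fin N))) := by
  have hA : Ex q (fun ω : Om N => (2 : ℝ) ^ (-κ) * ∏ e, (if ω e then (2 : ℝ) else 1)) =
      2 ^ (-κ) * (1 + q) ^ (Fintype.card (Sym2 (Fin N))) := by
    rw [Ex_const_mul, Ex_prod q (fun e b => if b then (2 : ℝ) else 1)]
    congr 1
    simp
    ring
  rw [← hA]
  refine Ex_mono h0 h1 fun ω => ind_le ?_ ?_
  · refine mul_nonneg (Real.rpow_nonneg (by norm_num) _) (Finset.prod_nonneg fun e _ => ?_)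
    split_ifs <;> norm_num
  · intro h
    rw [← Finset.prod_filter, Finset.prod_const, ← Real.rpow_natCast, ← Real.rpow_add (by norm_num)]
    exact Real.one_le_rpow (by norm_num) (by linarith)

lemma card_small {α : Type*} [Fintype α] {x : ℝ} (hx : 0 < x) (hx1 : x ≤ 1) (k : ℝ) :
    (((Finset.univ : Finset (Finset α)).filter (fun F => (F.card : ℝ) ≤ k)).card : ℝ) ≤
      (1 + x) ^ (Fintype.card α) * x ^ (-k) := by
  have h := Finset.sum_pow_mul_eq_add_pow x 1 (Finset.univ : Finset α)
  simp only [one_pow, mul_one, Finset.card_univ, Finset.powerset_univ] at h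
  rw [add_comm 1 x, ← h, Finset.sum_mul, Finset.card_eq_sum_ones, Nat.cast_sum]
  rw [Finset.sum_filter]
  refine Finset.sum_le_sum fun F _ => ?_
  split_ifs with hF
  · rw [← Real.rpow_natCast, ← Real.rpow_add hx, Nat.cast_one]
    exact Real.one_le_rpow_of_pos_of_le_one_of_nonpos hx hx1 (by linarith)
  · positivity

def xc {N : ℕ} (G : SimpleGraph (Fin N)) (X Y : Finset (Fin N)) : ℕ :=
  ∑ i ∈ X, ∑ j ∈ Y, if G.Adj i j then 1 else 0

lemma xc_eq {N : ℕ} (G : SimpleGraph (Fin N)) (X Y : Finset (Fin N)) :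
    xc G X Y = ((X ×ˢ Y).filter (fun x => G.Adj x.1 x.2)).card := by
  rw [Finset.card_filter, Finset.sum_product]; rfl

def DD {N : ℕ} (X Y : Finset (Fin N)) : Finset (Sym2 (Fin N)) :=
  (X ×ˢ Y).image (fun x => s(x.1, x.2))

lemma DD_inj {N : ℕ} {X Y : Finset (Fin N)} (h : Disjoint X Y) :
    Set.InjOn (fun x : Fin N × Fin N => s(x.1, x.2)) (X ×ˢ Y : Finset (Fin N × Fin N)) := by
  rintro ⟨a, b⟩ h1 ⟨c, d⟩ h2 heq
  simp only [Finset.coe_product, Set.mem_prod, Finset.mem_coe] at h1 h2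
  simp only [Sym2.eq_iff] at heq
  rcases heq with ⟨rfl, rfl⟩ | ⟨rfl, rfl⟩
  · rfl
  · exact absurd h2.2 (Finset.disjoint_left.mp h h1.1)

lemma DD_card {N : ℕ} {X Y : Finset (Fin N)} (h : Disjoint X Y) :
    (DD X Y).card = X.card * Y.card := by
  rw [DD, Finset.card_image_of_injOn (DD_inj h), Finset.card_product]

lemma DD_xc {N : ℕ} {X Y : Finset (Fin N)} (h : Disjoint X Y) (ω : Om N) :
    ((DD X Y).filter (fun e => ω e = true)).card = xc (gr ω) X Y := by
  rw [xc_eq, DD, Finset.filter_image, Finset.card_image_of_injOn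
    ((DD_inj h).mono (by exact_mod_cast Finset.filter_subset _ _))]
  congr 1
  apply Finset.filter_congr
  rintro ⟨a, b⟩ hab
  simp only [Finset.mem_product] at hab
  have : a ≠ b := by
    rintro rfl
    exact Finset.disjoint_left.mp h hab.1 hab.2
  simp [gr, this]

def Par {N : ℕ} (G : SimpleGraph (Fin N)) (U R : Finset (Fin N)) : Prop :=
  ∃ h : Fin N → ℕ, ∀ v ∈ U, v ∉ R → ∃ w ∈ U, G.Adj v w ∧ h w < h v

lemma par_of_reach {N : ℕ} {G G' : SimpleGraph (Fin N)} (hG : G' ≤ G) (U R : Finset (Fin N))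
    (hcl : ∀ v ∈ U, ∀ w, G'.Adj v w → w ∈ U)
    (hR : ∀ v ∈ U, ∃ r ∈ R, G'.Reachable v r) : Par G U R := by
  have hw : ∀ v, v ∈ U → ∃ n, ∃ r ∈ R, ∃ p : G'.Walk v r, p.length = n := by
    intro v hv
    obtain ⟨r, hr, ⟨p⟩⟩ := hR v hv
    exact ⟨_, r, hr, p, rfl⟩
  refine ⟨fun v => if hv : v ∈ U then Nat.find (hw v hv) else 0, ?_⟩
  intro v hv hvR
  obtain ⟨r, hr, p, hp⟩ := Nat.find_spec (hw v hv)
  cases p with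
  | nil => exact absurd hr hvR
  | @cons _ w _ hadj p' =>
    have hwU := hcl v hv w hadj
    refine ⟨w, hwU, hG hadj, ?_⟩
    simp only [dif_pos hv, dif_pos hwU]
    rw [← hp]
    have : Nat.find (hw w hwU) ≤ p'.length := Nat.find_min' _ ⟨r, hr, p', rfl⟩
    simp only [SimpleGraph.Walk.length_cons]
    omega

/-- fixed disjoint `R`, `V` with `U = R ∪ V`. -/
lemma par_fixed {N : ℕ} {p z : ℝ} (h0 : 0 ≤ p) (h1 : p ≤ 1) (hz : 0 < z) (hz1 : z ≤ 1)
    (R V : Finset (Fin N)) (hRV : Disjoint R V) (κ : ℝ) :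
    Ex p (fun ω => ind (Par (gr ω) (R ∪ V) R ∧ (crossCount (gr ω) (R ∪ V) : ℝ) ≤ κ)) ≤
      ((R ∪ V).card : ℝ) ^ V.card * (z ^ (-κ) * (p ^ V.card *
        (1 - p * (1 - z)) ^ ((R ∪ V).card * (N - (R ∪ V).card)))) := by
  set U := R ∪ V with hU
  let ed : (V → U) → V → Sym2 (Fin N) := fun f v => s((v : Fin N), (f v : Fin N))
  let S : Finset (V → U) := Finset.univ.filter (fun f => Function.Injective (ed f))
  have hdisj : Disjoint U Uᶜ := disjoint_compl_right
  refine (Pr_union h0 h1 S _ (fun f ω => (∀ e ∈ Finset.univ.image (ed f), ω e = true) ∧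
    (((DD U Uᶜ).filter (fun e => ω e = true)).card : ℝ) ≤ κ) ?_).trans ?_
  · rintro ω ⟨⟨h, hh⟩, hc⟩
    have : ∀ v : V, ∃ w : U, (gr ω).Adj v w ∧ h w < h v := by
      intro v
      obtain ⟨w, hw, h2⟩ := hh v (Finset.mem_union_right _ v.2)
        (fun hr => Finset.disjoint_left.mp hRV hr v.2)
      exact ⟨⟨w, hw⟩, h2⟩
    choose f hf using this
    refine ⟨f, ?_, ?_, ?_⟩
    · simp only [S, Finset.mem_filter, Finset.mem_univ, true_and]
      intro v v' hvv
      simp only [ed, Sym2.eq_iff] at hvv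
      rcases hvv with ⟨h1, _⟩ | ⟨h1, h2⟩
      · exact Subtype.ext h1
      · have a := (hf v).2
        have b := (hf v').2
        rw [h2] at a
        rw [← h1] at b
        omega
    · intro e he
      simp only [Finset.mem_image, Finset.mem_univ, true_and] at he
      obtain ⟨v, rfl⟩ := he
      exact (hf v).1.2
    · rw [DD_xc hdisj]; exact hc
  · have hb : ∀ f ∈ S, Ex p (fun ω => ind ((∀ e ∈ Finset.univ.image (ed f), ω e = true) ∧
        (((DD U Uᶜ).filter (fun e => ω e = true)).card : ℝ) ≤ κ)) ≤
        z ^ (-κ) * (p ^ V.card * (1 - p * (1 - z)) ^ (U.card * (N - U.card))) := by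
      intro f hf
      simp only [S, Finset.mem_filter, Finset.mem_univ, true_and] at hf
      have hd : Disjoint (Finset.univ.image (ed f)) (DD U Uᶜ) := by
        rw [Finset.disjoint_left]
        intro e he hD
        simp only [Finset.mem_image, Finset.mem_univ, true_and] at he
        obtain ⟨v, rfl⟩ := he
        simp only [DD, Finset.mem_image, Finset.mem_product, Prod.exists, Finset.mem_compl, ed,
          Sym2.eq_iff] at hD
        obtain ⟨a, b, ⟨_, hb⟩, h3⟩ := hD
        have hvU : (v : Fin N) ∈ U := Finset.mem_union_right _ v.2
        rcases h3 with ⟨_, rfl⟩ | ⟨_, rfl⟩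
        · exact hb (f v).2
        · exact hb hvU
      have := chernoff h0 h1 hz hz1 _ _ hd κ
      rw [Finset.card_image_of_injective _ hf, DD_card hdisj, Finset.card_compl,
        Finset.card_univ, Fintype.card_coe, Fintype.card_fin] at this
      exact this
    refine (Finset.sum_le_card_nsmul _ _ _ hb).trans ?_
    rw [nsmul_eq_mul]
    refine mul_le_mul_of_nonneg_right ?_ ?_
    · have : S.card ≤ U.card ^ V.card := by
        refine (Finset.card_le_univ _).trans ?_
        simp
      exact_mod_cast this
    · have : 0 ≤ 1 - p * (1 - z) := by nlinarith
      have := Real.rpow_nonneg hz.le (-κ)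
      positivity


def badF {N : ℕ} (θ : ℝ) (R : Finset (Fin N)) (u : ℕ) (ω : Om N) : Prop :=
  ∃ U : Finset (Fin N), R ⊆ U ∧ U.card = u ∧ Par (gr ω) U R ∧ (crossCount (gr ω) U : ℝ) ≤ θ * u

lemma lemF {β : ℝ} (hβ : 1 < β) : ∃ a θ d : ℝ, 0 < a ∧ a ≤ 1 / 2 ∧ 0 < θ ∧ 0 < d ∧
    ∀ (N : ℕ), β ≤ N → ∀ (R : Finset (Fin N)) (u : ℕ), (u : ℝ) ≤ a * N →
      Ex (β / N) (fun ω => ind (badF θ R u ω)) ≤ Real.exp (-(d * u)) := by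
  have hd0 : 0 < β - 1 - Real.log β := by
    have := Real.log_lt_sub_one_of_pos (by linarith : 0 < β) hβ.ne'
    linarith
  set d0 := β - 1 - Real.log β with hd0def
  set z := min (1 / 2) (d0 / (4 * β)) with hzdef
  have hβ0 : 0 < β := by linarith
  have hz : 0 < z := lt_min (by norm_num) (by positivity)
  have hz2 : z ≤ 1 / 2 := min_le_left _ _
  have hzβ : β * z ≤ d0 / 4 := by
    have : z ≤ d0 / (4 * β) := min_le_right _ _
    calc β * z ≤ β * (d0 / (4 * β)) := by gcongr
      _ = d0 / 4 := by field_simp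
  have hlz : 0 < - Real.log z := by
    have := Real.log_neg hz (by linarith)
    linarith
  refine ⟨z, d0 / (4 * (- Real.log z)), d0 / 4, hz, hz2, by positivity, by positivity, ?_⟩
  intro N hN R u hu
  set θ := d0 / (4 * (- Real.log z)) with hθ
  have hθ0 : 0 < θ := by positivity
  have hN0 : (0 : ℝ) < N := by linarith
  have h0 : 0 ≤ β / N := by positivity
  have h1 : β / N ≤ 1 := by rw [div_le_one hN0]; exact hN
  by_cases hru : R.card ≤ u
  swap
  · refine le_trans (Ex_mono h0 h1 (G := fun _ => 0) fun ω => ind_le le_rfl ?_) ?_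
    · rintro ⟨U, hRU, hUc, _⟩
      exact absurd (hUc ▸ Finset.card_le_card hRU) hru
    · rw [Ex_const]; positivity
  set n := u - R.card with hn
  have huN : (u : ℝ) ≤ N := by nlinarith
  have huN' : u ≤ N := by exact_mod_cast huN
  set B : ℝ := (u : ℝ) ^ n * (z ^ (-(θ * u)) * ((β / N) ^ n *
        (1 - (β / N) * (1 - z)) ^ (u * (N - u)))) with hB
  have hq : 0 ≤ 1 - (β / N) * (1 - z) := by nlinarith
  have hB0 : 0 ≤ B := by
    have := Real.rpow_nonneg hz.le (-(θ * u))
    positivity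
  let S : Finset (Finset (Fin N)) :=
    (Finset.powersetCard n Finset.univ).filter (fun V => Disjoint R V)
  have hS : (S.card : ℝ) ≤ (N : ℝ) ^ n / n.factorial := by
    refine le_trans ?_ (Nat.choose_le_pow_div n N)
    have : S.card ≤ N.choose n := by
      refine (Finset.card_filter_le _ _).trans ?_
      simp
    exact_mod_cast this
  have step1 : Ex (β / N) (fun ω => ind (badF θ R u ω)) ≤ S.card * B := by
    refine (Pr_union h0 h1 S _ (fun V ω => Par (gr ω) (R ∪ V) R ∧ (R ∪ V).card = u ∧
      (crossCount (gr ω) (R ∪ V) : ℝ) ≤ θ * u) ?_).trans ?_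
    · rintro ω ⟨U, hRU, hUc, hP, hc⟩
      have hUV : R ∪ (U \ R) = U := Finset.union_sdiff_of_subset hRU
      refine ⟨U \ R, ?_, ?_⟩
      · simp only [S, Finset.mem_filter, Finset.mem_powersetCard, Finset.subset_univ, true_and]
        exact ⟨by rw [Finset.card_sdiff_of_subset hRU, hUc], Finset.disjoint_sdiff⟩
      · rw [hUV]; exact ⟨hP, hUc, hc⟩
    · rw [← nsmul_eq_mul]
      refine Finset.sum_le_card_nsmul _ _ _ ?_
      intro V hV
      simp only [S, Finset.mem_filter, Finset.mem_powersetCard, Finset.subset_univ,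
        true_and] at hV
      have hc : (R ∪ V).card = u := by
        rw [Finset.card_union_of_disjoint hV.2, hV.1]; omega
      have := par_fixed h0 h1 hz (by linarith) R V hV.2 (θ * u)
      rw [hc, hV.1] at this
      refine le_trans (Ex_mono h0 h1 fun ω => ind_mono ?_) this
      rintro ⟨a, b, c⟩
      exact ⟨a, c⟩
  refine step1.trans ((mul_le_mul_of_nonneg_right hS hB0).trans ?_)
  have e1 : (N : ℝ) ^ n / n.factorial * B = ((u : ℝ) ^ n / n.factorial) * β ^ n *
      (z ^ (-(θ * u)) * (1 - (β / N) * (1 - z)) ^ (u * (N - u))) := by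
    rw [hB, div_pow]
    field_simp
  rw [e1]
  have b1 : (u : ℝ) ^ n / n.factorial ≤ Real.exp u :=
    Real.pow_div_factorial_le_exp _ (Nat.cast_nonneg u) n
  have b2 : β ^ n ≤ Real.exp (Real.log β * u) := by
    rw [Real.exp_mul, Real.exp_log hβ0, Real.rpow_natCast]
    exact pow_le_pow_right₀ hβ.le (Nat.sub_le _ _)
  have b3 : z ^ (-(θ * u)) = Real.exp (d0 / 4 * u) := by
    rw [Real.rpow_def_of_pos hz]
    congr 1
    rw [hθ]
    have : Real.log z ≠ 0 := by linarith
    field_simp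
  have b4 : (1 - (β / N) * (1 - z)) ^ (u * (N - u)) ≤ Real.exp (-((β - d0 / 2) * u)) := by
    calc (1 - (β / N) * (1 - z)) ^ (u * (N - u))
        ≤ (Real.exp (-((β / N) * (1 - z)))) ^ (u * (N - u)) := by
          refine pow_le_pow_left₀ hq ?_ _
          have := Real.add_one_le_exp (-((β / N) * (1 - z)))
          linarith
      _ = Real.exp ((u * (N - u) : ℝ) * (-((β / N) * (1 - z)))) := by
          rw [← Real.exp_nat_mul]
          push_cast [huN']
          rfl
      _ ≤ _ := by
          apply Real.exp_le_exp.mpr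
          have hh : (u * (N - u) : ℝ) * ((β / N) * (1 - z)) = β * (1 - z) * (1 - u / N) * u := by
            field_simp
          have hu' : (u : ℝ) / N ≤ z := by rw [div_le_iff₀ hN0]; exact hu
          have : (β - d0 / 2) ≤ β * (1 - z) * (1 - u / N) := by
            have : β * (1 - z) * (1 - z) ≤ β * (1 - z) * (1 - u / N) := by
              have : 0 ≤ β * (1 - z) := by nlinarith
              gcongr
            nlinarith [sq_nonneg z]
          have : (β - d0 / 2) * u ≤ β * (1 - z) * (1 - u / N) * u := by gcongr
          linarith
  rw [b3]
  calc (u : ℝ) ^ n / n.factorial * β ^ n *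
      (Real.exp (d0 / 4 * u) * (1 - (β / N) * (1 - z)) ^ (u * (N - u)))
      ≤ Real.exp u * Real.exp (Real.log β * u) * (Real.exp (d0 / 4 * u) *
        Real.exp (-((β - d0 / 2) * u))) := by
        gcongr
    _ = Real.exp (-(d0 / 4 * u)) := by
        rw [← Real.exp_add, ← Real.exp_add, ← Real.exp_add]
        congr 1
        rw [hd0def]; ring

/-- E1 bad: a connected set of medium size with few boundary edges. -/
def badE1 {N : ℕ} (a θ C : ℝ) (ω : Om N) : Prop :=
  ∃ (v : Fin N) (u : ℕ), C * Real.log N ≤ u ∧ (u : ℝ) ≤ a * N ∧ badF θ {v} u ω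

/-- E2 bad. -/
def badE2 {N : ℕ} (a θ τ : ℝ) (ω : Om N) : Prop :=
  ∃ (R : Finset (Fin N)) (u : ℕ), (R.card : ℝ) ≤ τ * N ∧ a / 2 * N ≤ u ∧ (u : ℝ) ≤ a * N ∧
    badF θ R u ω

lemma E1_bound {β a θ d : ℝ} (hβ : 1 < β) (ha : a ≤ 1 / 2) (hd : 0 < d)
    (h : ∀ (N : ℕ), β ≤ N → ∀ (R : Finset (Fin N)) (u : ℕ), (u : ℝ) ≤ a * N →
      Ex (β / N) (fun ω => ind (badF θ R u ω)) ≤ Real.exp (-(d * u))) (N : ℕ) (hN : β ≤ N) :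
    Ex (β / N) (fun ω : Om N => ind (badE1 a θ (3 / d) ω)) ≤ 2 / N := by
  have hN0 : (0 : ℝ) < N := by linarith
  have h0 : 0 ≤ β / N := by positivity
  have h1 : β / N ≤ 1 := by rw [div_le_one hN0]; exact hN
  let S : Finset (Fin N × ℕ) := (Finset.univ ×ˢ Finset.range (N + 1)).filter
    (fun x => 3 / d * Real.log N ≤ x.2 ∧ (x.2 : ℝ) ≤ a * N)
  refine (Pr_union h0 h1 S _ (fun x ω => badF θ {x.1} x.2 ω) ?_).trans ?_
  · rintro ω ⟨v, u, h2, h3, h4⟩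
    refine ⟨(v, u), ?_, h4⟩
    simp only [S, Finset.mem_filter, Finset.mem_product, Finset.mem_univ, true_and,
      Finset.mem_range]
    refine ⟨?_, h2, h3⟩
    have : (u : ℝ) ≤ N := by nlinarith
    have : u ≤ N := by exact_mod_cast this
    omega
  · have hb : ∀ x ∈ S, Ex (β / N) (fun ω => ind (badF θ {x.1} x.2 ω)) ≤ 1 / (N : ℝ) ^ 3 := by
      intro x hx
      simp only [S, Finset.mem_filter] at hx
      refine (h N hN _ _ hx.2.2).trans ?_
      have : (1 : ℝ) / N ^ 3 = Real.exp (-(3 * Real.log N)) := by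
        rw [Real.exp_neg, mul_comm, Real.exp_mul, Real.exp_log hN0]
        norm_cast
        simp
      rw [this]
      apply Real.exp_le_exp.mpr
      have h5 := mul_le_mul_of_nonneg_left hx.2.1 hd.le
      have : d * (3 / d * Real.log N) = 3 * Real.log N := by field_simp
      linarith
    refine (Finset.sum_le_card_nsmul _ _ _ hb).trans ?_
    rw [nsmul_eq_mul]
    have hS : (S.card : ℝ) ≤ N * (N + 1) := by
      have : S.card ≤ N * (N + 1) := by
        refine (Finset.card_filter_le _ _).trans ?_
        simp
      exact_mod_cast this
    have hN1 : (1 : ℝ) ≤ N := by linarith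
    calc (S.card : ℝ) * (1 / (N : ℝ) ^ 3) ≤ ((N : ℝ) * (N + N)) * (1 / (N : ℝ) ^ 3) := by
          gcongr
          refine hS.trans ?_
          gcongr
      _ = 2 / (N : ℝ) := by field_simp; ring

lemma E2_bound {β a θ d : ℝ} (hβ : 1 < β) (ha0 : 0 < a) (ha : a ≤ 1 / 2) (hd : 0 < d)
    (h : ∀ (N : ℕ), β ≤ N → ∀ (R : Finset (Fin N)) (u : ℕ), (u : ℝ) ≤ a * N →
      Ex (β / N) (fun ω => ind (badF θ R u ω)) ≤ Real.exp (-(d * u))) :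
    ∃ τ δ : ℝ, 0 < τ ∧ 0 < δ ∧ ∀ (N : ℕ) (_ : β ≤ N),
    Ex (β / N) (fun ω : Om N => ind (badE2 a θ τ ω)) ≤ 2 * N * Real.exp (-(δ * N)) := by
  set x := min (1 / 2) (d * a / 8) with hx
  have hx0 : 0 < x := lt_min (by norm_num) (by positivity)
  have hx1 : x ≤ 1 / 2 := min_le_left _ _
  have hx2 : x ≤ d * a / 8 := min_le_right _ _
  have hlx : 0 < - Real.log x := by
    have := Real.log_neg hx0 (by linarith)
    linarith
  refine ⟨d * a / (8 * (- Real.log x)), d * a / 4, by positivity, by positivity, ?_⟩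
  intro N hN
  set τ := d * a / (8 * (- Real.log x)) with hτ
  have hN0 : (0 : ℝ) < N := by linarith
  have h0 : 0 ≤ β / N := by positivity
  have h1 : β / N ≤ 1 := by rw [div_le_one hN0]; exact hN
  let S0 := (Finset.univ : Finset (Finset (Fin N))).filter (fun F => (F.card : ℝ) ≤ τ * N)
  let S : Finset (Finset (Fin N) × ℕ) := (S0 ×ˢ Finset.range (N + 1)).filter
    (fun x => a / 2 * N ≤ x.2 ∧ (x.2 : ℝ) ≤ a * N)
  refine (Pr_union h0 h1 S _ (fun x ω => badF θ x.1 x.2 ω) ?_).trans ?_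
  · rintro ω ⟨v, u, h1, h2, h3, h4⟩
    refine ⟨(v, u), ?_, h4⟩
    simp only [S, S0, Finset.mem_filter, Finset.mem_product, Finset.mem_univ, true_and,
      Finset.mem_range]
    refine ⟨⟨h1, ?_⟩, h2, h3⟩
    have : (u : ℝ) ≤ N := by nlinarith
    have : u ≤ N := by exact_mod_cast this
    omega
  · have hb : ∀ x ∈ S, Ex (β / N) (fun ω => ind (badF θ x.1 x.2 ω)) ≤
        Real.exp (-(d * (a / 2 * N))) := by
      intro x hx
      simp only [S, Finset.mem_filter] at hx
      refine (h N hN _ _ hx.2.2).trans ?_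
      apply Real.exp_le_exp.mpr
      have h5 := mul_le_mul_of_nonneg_left hx.2.1 hd.le
      linarith
    refine (Finset.sum_le_card_nsmul _ _ _ hb).trans ?_
    rw [nsmul_eq_mul]
    have hS0 : (S0.card : ℝ) ≤ Real.exp (d * a / 4 * N) := by
      refine (card_small hx0 (by linarith) (τ * N)).trans ?_
      rw [Fintype.card_fin]
      have c1 : (1 + x) ^ N ≤ Real.exp (d * a / 8 * N) := by
        calc (1 + x) ^ N ≤ (Real.exp x) ^ N := by
              refine pow_le_pow_left₀ (by linarith) ?_ _
              have := Real.add_one_le_exp x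
              linarith
          _ = Real.exp (N * x) := by rw [← Real.exp_nat_mul]
          _ ≤ _ := Real.exp_le_exp.mpr (by nlinarith)
      have c2 : x ^ (-(τ * N)) = Real.exp (d * a / 8 * N) := by
        rw [Real.rpow_def_of_pos hx0]
        congr 1
        rw [hτ]
        have : Real.log x ≠ 0 := by linarith
        field_simp
      rw [c2]
      refine (mul_le_mul_of_nonneg_right c1 (Real.exp_pos _).le).trans ?_
      rw [← Real.exp_add]
      apply Real.exp_le_exp.mpr
      linarith
    have hS : (S.card : ℝ) ≤ S0.card * (N + 1) := by
      have : S.card ≤ S0.card * (N + 1) := by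
        refine (Finset.card_filter_le _ _).trans ?_
        simp
      exact_mod_cast this
    have hN1 : (1 : ℝ) ≤ N := by linarith
    calc (S.card : ℝ) * Real.exp (-(d * (a / 2 * N)))
        ≤ (Real.exp (d * a / 4 * N) * (N + N)) * Real.exp (-(d * (a / 2 * N))) := by
          refine mul_le_mul_of_nonneg_right (hS.trans ?_) (Real.exp_pos _).le
          gcongr
      _ = 2 * N * (Real.exp (d * a / 4 * N) * Real.exp (-(d * (a / 2 * N)))) := by ring
      _ = 2 * N * Real.exp (-(d * a / 4 * N)) := by
          rw [← Real.exp_add]; congr 2; ring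


def cs {N : ℕ} (G : SimpleGraph (Fin N)) (v : Fin N) : Finset (Fin N) :=
  Finset.univ.filter (fun w => G.Reachable v w)

lemma mem_cs {N : ℕ} {G : SimpleGraph (Fin N)} {v w : Fin N} : w ∈ cs G v ↔ G.Reachable v w := by
  simp [cs]

lemma cs_eq {N : ℕ} {G : SimpleGraph (Fin N)} {v w : Fin N} (h : G.Reachable v w) :
    cs G v = cs G w := by
  ext x
  simp only [mem_cs]
  exact ⟨fun h' => h.symm.trans h', fun h' => h.trans h'⟩

lemma exit_edge {N : ℕ} {G : SimpleGraph (Fin N)} (D : Finset (Fin N)) {x y : Fin N}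
    (h : G.Reachable x y) (hx : x ∈ D) (hy : y ∉ D) : ∃ a ∈ D, ∃ b, b ∉ D ∧ G.Adj a b := by
  obtain ⟨p⟩ := h
  obtain ⟨d, _, h1, h2⟩ := p.exists_boundary_dart (D : Set (Fin N)) hx hy
  exact ⟨d.fst, h1, d.snd, h2, d.adj⟩

lemma xc_mono {N : ℕ} {G G' : SimpleGraph (Fin N)} {X Y X' Y' : Finset (Fin N)}
    (h : ∀ i ∈ X', ∀ j ∈ Y', G'.Adj i j → i ∈ X ∧ j ∈ Y ∧ G.Adj i j) :
    xc G' X' Y' ≤ xc G X Y := by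
  rw [xc_eq, xc_eq]
  refine Finset.card_le_card ?_
  rintro ⟨i, j⟩ hij
  simp only [Finset.mem_filter, Finset.mem_product] at hij ⊢
  have := h i hij.1.1 j hij.1.2 hij.2
  tauto

lemma xc_comm {N : ℕ} (G : SimpleGraph (Fin N)) (X Y : Finset (Fin N)) :
    xc G X Y = xc G Y X := by
  unfold xc
  rw [Finset.sum_comm]
  simp only [SimpleGraph.adj_comm]

lemma crossCount_eq_xc {N : ℕ} (G : SimpleGraph (Fin N)) (S : Finset (Fin N)) :
    crossCount G S = xc G S Sᶜ := rfl

def badLin {N : ℕ} (a k : ℝ) (ω : Om N) : Prop :=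
  ∃ (v : Fin N) (X : Finset (Fin N)), X ⊆ cs (gr ω) v ∧ a * N < X.card ∧
    a * N < (cs (gr ω) v \ X).card ∧ (crossCount (gr ω) X : ℝ) ≤ k

def XX {N : ℕ} (a k : ℝ) (G : SimpleGraph (Fin N)) : Finset (Finset (Fin N)) :=
  Finset.univ.filter (fun X => (∀ v ∈ X, a / 2 * N ≤ (cs G v).card) ∧ (crossCount G X : ℝ) ≤ k)

def badX {N : ℕ} (a k : ℝ) (ω' ω'' : Om N) : Prop :=
  ∃ X ∈ XX a k (gr ω'), ∃ Y ∈ XX a k (gr ω'), Disjoint X Y ∧ a / 2 * N ≤ X.card ∧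
    a / 2 * N ≤ Y.card ∧ (xc (gr ω'') X Y : ℝ) ≤ k

def cnt {N : ℕ} (ω : Om N) : ℕ := (Finset.univ.filter (fun e => ω e = true)).card

lemma sub_union {N : ℕ} (G : SimpleGraph (Fin N)) (U' : Finset (Fin N)) (m : ℝ) (hm : 0 < m)
    (hcl : ∀ v ∈ U', cs G v ⊆ U') (hs : ∀ v ∈ U', ((cs G v).card : ℝ) < m)
    (hU : m ≤ U'.card) :
    ∃ U ⊆ U', (∀ v ∈ U, cs G v ⊆ U) ∧ m ≤ U.card ∧ (U.card : ℝ) ≤ 2 * m := by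
  let S := (Finset.univ : Finset (Finset (Fin N))).filter
    (fun U => U ⊆ U' ∧ (∀ v ∈ U, cs G v ⊆ U) ∧ m ≤ U.card)
  obtain ⟨U, hUS, hmin⟩ := Finset.exists_min_image S Finset.card ⟨U', by
    simp only [S, Finset.mem_filter, Finset.mem_univ, true_and]
    exact ⟨le_rfl, hcl, hU⟩⟩
  simp only [S, Finset.mem_filter, Finset.mem_univ, true_and] at hUS hmin
  obtain ⟨h1, h2, h3⟩ := hUS
  refine ⟨U, h1, h2, h3, ?_⟩
  have hne : U.Nonempty := by
    rw [Finset.nonempty_iff_ne_empty]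
    rintro rfl
    simp at h3
    linarith
  obtain ⟨v, hv⟩ := hne
  have hvc : v ∈ cs G v := mem_cs.mpr (SimpleGraph.Reachable.refl v)
  have hlt : ((U \ cs G v).card : ℝ) < m := by
    by_contra hcon
    push Not at hcon
    have := hmin (U \ cs G v) ⟨Finset.sdiff_subset.trans h1, ?_, hcon⟩
    · have h4 : (U \ cs G v).card < U.card := by
        apply Finset.card_lt_card
        refine Finset.ssubset_iff_subset_ne.mpr ⟨Finset.sdiff_subset, ?_⟩
        intro h
        rw [← h] at hv
        exact (Finset.mem_sdiff.mp hv).2 hvc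
      omega
    · intro w hw x hx
      rw [Finset.mem_sdiff] at hw ⊢
      refine ⟨h2 w hw.1 hx, fun hx' => hw.2 ?_⟩
      rw [mem_cs] at *
      exact hx'.trans hx.symm
  have : (U.card : ℝ) ≤ (U \ cs G v).card + (cs G v).card := by
    have : U.card ≤ (U \ cs G v).card + (cs G v).card := by
      rw [Finset.card_sdiff_add_card]
      exact Finset.card_le_card Finset.subset_union_left
    exact_mod_cast this
  have := hs v (h1 hv)
  linarith

lemma lin_det {N : ℕ} {a θ τ η k : ℝ} (ha : 0 < a) (hN : 0 < N) (hθ : 0 < θ) (hη1 : 4 * η ≤ τ)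
    (hη2 : 2 * η ≤ θ * (a / 2)) (ω ω' ω'' : Om N) (hω : ω = fun e => ω' e || ω'' e)
    (hc : (cnt ω'' : ℝ) ≤ 2 * η * N) (hE2 : ¬ badE2 a θ τ ω) (hb : badLin a k ω) :
    badX a k ω' ω'' := by
  obtain ⟨v, X, hXC, hX, hY, hcr⟩ := hb
  have hN0 : (0 : ℝ) < N := by exact_mod_cast hN
  set G := gr ω with hG
  set G' := gr ω' with hG'
  set C := cs G v with hC
  have hle : G' ≤ G := by
    intro i j hij
    refine ⟨hij.1, ?_⟩
    rw [hω]
    simp [hij.2]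
  have hle2 : gr ω'' ≤ G := by
    intro i j hij
    refine ⟨hij.1, ?_⟩
    rw [hω]
    simp [hij.2]
  have hCcl : ∀ w ∈ C, cs G' w ⊆ C := by
    intro w hw x hx
    rw [hC, mem_cs] at hw ⊢
    rw [mem_cs] at hx
    exact hw.trans (hx.mono hle)
  set U' := C.filter (fun w => ((cs G' w).card : ℝ) < a / 2 * N) with hU'
  have hU'cl : ∀ w ∈ U', cs G' w ⊆ U' := by
    intro w hw x hx
    rw [hU', Finset.mem_filter] at *
    refine ⟨hCcl w hw.1 hx, ?_⟩
    rw [← cs_eq (mem_cs.mp hx)]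
    exact hw.2
  have hU'small : (U'.card : ℝ) < a / 2 * N := by
    by_contra hcon
    push Not at hcon
    obtain ⟨U, hUU, hUcl, hU1, hU2⟩ := sub_union G' U' (a / 2 * N) (by positivity) hU'cl
      (fun w hw => (Finset.mem_filter.mp hw).2) hcon
    apply hE2
    let Es := Finset.univ.filter (fun e => ω'' e = true)
    set R := U.filter (fun w => ∃ e, ω'' e = true ∧ w ∈ e) with hR
    have hRc : R.card ≤ 2 * cnt ω'' := by
      have : R ⊆ Es.biUnion (fun e => Sym2.toFinset e) := by
        intro w hw
        simp only [hR, Finset.mem_filter] at hw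
        obtain ⟨_, e, he, hwe⟩ := hw
        simp only [Finset.mem_biUnion, Es, Finset.mem_filter, Finset.mem_univ, true_and]
        exact ⟨e, he, by simpa using hwe⟩
      refine (Finset.card_le_card this).trans ?_
      refine (Finset.card_biUnion_le_card_mul _ _ 2 ?_).trans ?_
      · intro e _
        induction e with
        | _ i j =>
          rw [Sym2.toFinset_mk_eq]
          exact Finset.card_le_two
      · rw [mul_comm]; rfl
    have hRc' : (R.card : ℝ) ≤ 2 * cnt ω'' := by exact_mod_cast hRc
    refine ⟨R, U.card, by nlinarith, hU1, by linarith, U, Finset.filter_subset _ _, rfl, ?_, ?_⟩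
    · refine par_of_reach hle U R ?_ ?_
      · intro w hw x hx
        exact hUcl w hw (mem_cs.mpr hx.reachable)
      · intro w hw
        have hwU' := hUU hw
        rw [hU', Finset.mem_filter] at hwU'
        have : ∃ y ∈ C, y ∉ cs G' w := by
          by_contra hcon2
          push Not at hcon2
          have h1 := Finset.card_le_card (show C ⊆ cs G' w from hcon2)
          have h2 := Finset.card_le_card hXC
          have h3 : (X.card : ℝ) ≤ (cs G' w).card := by exact_mod_cast h2.trans h1
          have : a / 2 * N ≤ a * N := by nlinarith
          linarith [hwU'.2]
        obtain ⟨y, hyC, hy⟩ := this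
        have hwy : G.Reachable w y := by
          have h1 := hwU'.1
          rw [hC, mem_cs] at h1 hyC
          exact h1.symm.trans hyC
        obtain ⟨x, hx, b, hb, hxb⟩ := exit_edge (cs G' w) hwy
          (mem_cs.mpr (SimpleGraph.Reachable.refl w)) hy
        refine ⟨x, ?_, mem_cs.mp hx⟩
        rw [hR, Finset.mem_filter]
        refine ⟨hUcl w hw hx, s(x, b), ?_, by simp⟩
        have h1 := hxb.2
        rw [hω] at h1
        simp only [Bool.or_eq_true] at h1
        rcases h1 with h1 | h1
        · exfalso
          apply hb
          rw [mem_cs] at hx ⊢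
          exact hx.trans (SimpleGraph.Adj.reachable (G := G') ⟨hxb.1, h1⟩)
        · exact h1
    · have hcc : crossCount (gr ω) U ≤ cnt ω'' := by
        rw [crossCount_eq_xc, ← DD_xc disjoint_compl_right]
        refine Finset.card_le_card ?_
        intro e he
        simp only [DD, Finset.mem_filter, Finset.mem_image, Finset.mem_product,
          Finset.mem_compl, Prod.exists] at he
        obtain ⟨⟨i, j, ⟨hi, hj⟩, rfl⟩, he⟩ := he
        simp only [Finset.mem_filter, Finset.mem_univ, true_and]
        rw [hω] at he
        simp only [Bool.or_eq_true] at he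
        rcases he with h1 | h1
        · exfalso
          apply hj
          have hij : i ≠ j := by rintro rfl; exact hj hi
          exact hUcl i hi (mem_cs.mpr (SimpleGraph.Adj.reachable (G := G') ⟨hij, h1⟩))
        · exact h1
      have : (crossCount (gr ω) U : ℝ) ≤ cnt ω'' := by exact_mod_cast hcc
      calc (crossCount (gr ω) U : ℝ) ≤ 2 * η * N := this.trans hc
        _ ≤ θ * (a / 2) * N := by gcongr
        _ = θ * (a / 2 * N) := by ring
        _ ≤ θ * U.card := by gcongr
  have hnU : ∀ w ∈ C, w ∉ U' → a / 2 * N ≤ (cs G' w).card := by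
    intro w hw hwU
    by_contra hcon
    push Not at hcon
    exact hwU (Finset.mem_filter.mpr ⟨hw, hcon⟩)
  have hnU2 : ∀ i ∈ C, i ∉ U' → ∀ j, G'.Adj i j → j ∈ C ∧ j ∉ U' := by
    intro i hi hiU j hij
    refine ⟨hCcl i hi (mem_cs.mpr hij.reachable), fun hj => hiU ?_⟩
    exact hU'cl j hj (mem_cs.mpr hij.symm.reachable)
  have hcard : ∀ Z : Finset (Fin N), a * N < Z.card → a / 2 * N ≤ (Z \ U').card := by
    intro Z hZ
    have : (Z.card : ℝ) ≤ (Z \ U').card + U'.card := by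
      have : Z.card ≤ (Z \ U').card + U'.card := by
        rw [Finset.card_sdiff_add_card]
        exact Finset.card_le_card Finset.subset_union_left
      exact_mod_cast this
    linarith
  refine ⟨X \ U', ?_, (C \ X) \ U', ?_, ?_, hcard _ hX, hcard _ hY, ?_⟩
  · simp only [XX, Finset.mem_filter, Finset.mem_univ, true_and]
    refine ⟨fun w hw => ?_, le_trans ?_ hcr⟩
    · rw [Finset.mem_sdiff] at hw
      exact hnU w (hXC hw.1) hw.2
    · rw [crossCount_eq_xc, crossCount_eq_xc]
      norm_cast
      refine xc_mono fun i hi j hj hij => ?_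
      rw [Finset.mem_sdiff] at hi
      rw [Finset.mem_compl, Finset.mem_sdiff] at hj
      rw [Finset.mem_compl]
      have := hnU2 i (hXC hi.1) hi.2 j hij
      exact ⟨hi.1, fun h => hj ⟨h, this.2⟩, hle hij⟩
  · simp only [XX, Finset.mem_filter, Finset.mem_univ, true_and]
    refine ⟨fun w hw => ?_, le_trans ?_ hcr⟩
    · rw [Finset.mem_sdiff, Finset.mem_sdiff] at hw
      exact hnU w hw.1.1 hw.2
    · rw [crossCount_eq_xc, crossCount_eq_xc, xc_comm G X]
      norm_cast
      refine xc_mono fun i hi j hj hij => ?_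
      rw [Finset.mem_sdiff, Finset.mem_sdiff] at hi
      rw [Finset.mem_compl, Finset.mem_sdiff, Finset.mem_sdiff] at hj
      rw [Finset.mem_compl]
      have := hnU2 i hi.1.1 hi.2 j hij
      refine ⟨hi.1.2, ?_, hle hij⟩
      by_contra h
      exact hj ⟨⟨this.1, h⟩, this.2⟩
  · rw [Finset.disjoint_left]
    intro w hw hw2
    simp only [Finset.mem_sdiff] at hw hw2
    exact hw2.1.2 hw.1
  · refine le_trans ?_ hcr
    rw [crossCount_eq_xc]
    norm_cast
    refine xc_mono fun i hi j hj hij => ?_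
    simp only [Finset.mem_sdiff] at hi hj
    rw [Finset.mem_compl]
    exact ⟨hi.1, hj.1.2, hle2 hij⟩

lemma card_sym2_le (N : ℕ) : Fintype.card (Sym2 (Fin N)) ≤ N ^ 2 := by
  have := Fintype.card_le_of_surjective (fun x : Fin N × Fin N => s(x.1, x.2)) (by
    intro e
    induction e with
    | _ i j => exact ⟨(i, j), rfl⟩)
  simpa [sq] using this

lemma card_XX {N : ℕ} (hN : 0 < N) {a k : ℝ} (ha : 0 < a) (G : SimpleGraph (Fin N)) :
    ((XX a k G).card : ℝ) ≤ Real.exp 1 * Real.exp (2 * k * Real.log N) * 2 ^ (2 / a) := by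
  have hN0 : (0 : ℝ) < N := by exact_mod_cast hN
  let rep : Fin N → Fin N := fun v => (G.connectedComponentMk v).out
  have hrep : ∀ v, G.Reachable v (rep v) := by
    intro v
    apply SimpleGraph.ConnectedComponent.exact
    exact (Quot.out_eq (G.connectedComponentMk v)).symm
  have hrep2 : ∀ v w, G.Reachable v w → rep v = rep w := by
    intro v w h
    simp only [rep]
    rw [SimpleGraph.ConnectedComponent.sound h]
  let Rp := Finset.univ.filter (fun v => rep v = v ∧ a / 2 * N ≤ (cs G v).card)
  have hRp : (Rp.card : ℝ) ≤ 2 / a := by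
    have h1 : (Rp.biUnion (cs G)).card = ∑ v ∈ Rp, (cs G v).card := by
      refine Finset.card_biUnion ?_
      intro v hv w hw hvw
      rw [Function.onFun, Finset.disjoint_left]
      intro x hx hx'
      have hv := Finset.mem_coe.mp hv
      have hw := Finset.mem_coe.mp hw
      simp only [Rp, Finset.mem_filter, Finset.mem_univ, true_and] at hv hw
      rw [mem_cs] at hx hx'
      apply hvw
      rw [← hv.1, ← hw.1]
      exact hrep2 _ _ (hx.trans hx'.symm)
    have h2 : (Rp.biUnion (cs G)).card ≤ N := by
      simpa using Finset.card_le_univ (Rp.biUnion (cs G))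
    have h3 : (Rp.card : ℝ) * (a / 2 * N) ≤ N := by
      calc (Rp.card : ℝ) * (a / 2 * N) = ∑ v ∈ Rp, (a / 2 * N) := by simp
        _ ≤ ∑ v ∈ Rp, ((cs G v).card : ℝ) := by
            refine Finset.sum_le_sum fun v hv => ?_
            exact (Finset.mem_filter.mp hv).2.2
        _ ≤ N := by
            rw [h1] at h2
            exact_mod_cast h2
    rw [le_div_iff₀ ha]
    have : (Rp.card : ℝ) * a * N ≤ 2 * N := by linarith
    exact le_of_mul_le_mul_right this hN0
  let bd : Finset (Fin N) → Finset (Sym2 (Fin N)) := fun X =>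
    ((X ×ˢ Xᶜ).filter (fun x => G.Adj x.1 x.2)).image (fun x => s(x.1, x.2))
  have hbd : ∀ X v w, G.Adj v w → (s(v, w) ∈ bd X ↔ ¬ (v ∈ X ↔ w ∈ X)) := by
    intro X v w hvw
    simp only [bd, Finset.mem_image, Finset.mem_filter, Finset.mem_product, Finset.mem_compl,
      Prod.exists, Sym2.eq_iff]
    constructor
    · rintro ⟨i, j, ⟨⟨hi, hj⟩, _⟩, ⟨rfl, rfl⟩ | ⟨rfl, rfl⟩⟩ <;> tauto
    · intro h
      by_cases hv : v ∈ X
      · exact ⟨v, w, ⟨⟨hv, by tauto⟩, hvw⟩, Or.inl ⟨rfl, rfl⟩⟩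
      · exact ⟨w, v, ⟨⟨by tauto, hv⟩, hvw.symm⟩, Or.inr ⟨rfl, rfl⟩⟩
  let F0 := (Finset.univ : Finset (Finset (Sym2 (Fin N)))).filter (fun F => (F.card : ℝ) ≤ k)
  have hcard : (XX a k G).card ≤ (F0 ×ˢ Rp.powerset).card := by
    refine Finset.card_le_card_of_injOn (fun X => (bd X, X ∩ Rp)) ?_ ?_
    · intro X hX
      have hX := Finset.mem_coe.mp hX
      simp only [XX, Finset.mem_filter, Finset.mem_univ, true_and] at hX
      simp only [Finset.coe_product, Set.mem_prod, Finset.mem_coe, F0, Finset.mem_filter,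
        Finset.mem_univ, true_and, Finset.mem_powerset]
      refine ⟨le_trans ?_ hX.2, Finset.inter_subset_right⟩
      rw [crossCount_eq_xc, xc_eq]
      exact_mod_cast Finset.card_image_le
    · intro X hX X' hX' heq
      have hX := Finset.mem_coe.mp hX
      have hX' := Finset.mem_coe.mp hX'
      simp only [XX, Finset.mem_filter, Finset.mem_univ, true_and] at hX hX'
      simp only [Prod.mk.injEq] at heq
      obtain ⟨hb, hr⟩ := heq
      have hstep : ∀ v w, G.Adj v w → ((v ∈ X ↔ v ∈ X') ↔ (w ∈ X ↔ w ∈ X')) := by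
        intro v w hvw
        have h1 := hbd X v w hvw
        have h2 := hbd X' v w hvw
        rw [hb] at h1
        rw [h1] at h2
        tauto
      have hwalk : ∀ v w, G.Reachable v w → ((v ∈ X ↔ v ∈ X') ↔ (w ∈ X ↔ w ∈ X')) := by
        rintro v w ⟨p⟩
        induction p with
        | nil => exact Iff.rfl
        | cons h _ ih => exact (hstep _ _ h).trans ih
      have hfin : ∀ v, a / 2 * N ≤ (cs G v).card → (v ∈ X ↔ v ∈ X') := by
        intro v hv
        rw [hwalk v (rep v) (hrep v)]
        have hm : rep v ∈ Rp := by
          simp only [Rp, Finset.mem_filter, Finset.mem_univ, true_and]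
          refine ⟨(hrep2 _ _ (hrep v)).symm, ?_⟩
          rw [← cs_eq (hrep v)]
          exact hv
        have h1 : rep v ∈ X ∩ Rp ↔ rep v ∈ X' ∩ Rp := by rw [hr]
        simp only [Finset.mem_inter, hm, and_true] at h1
        exact h1
      ext v
      constructor
      · intro hv
        exact (hfin v (hX.1 v hv)).mp hv
      · intro hv
        exact (hfin v (hX'.1 v hv)).mpr hv
  rw [Finset.card_product, Finset.card_powerset] at hcard
  have hcard' : ((XX a k G).card : ℝ) ≤ F0.card * 2 ^ Rp.card := by exact_mod_cast hcard
  refine hcard'.trans ?_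
  have hx0 : (0 : ℝ) < 1 / N ^ 2 := by positivity
  have hN1 : (1 : ℝ) ≤ N := by exact_mod_cast hN
  have hx1 : (1 : ℝ) / N ^ 2 ≤ 1 := by
    rw [div_le_one (by positivity)]
    exact one_le_pow₀ hN1
  have hF0 : (F0.card : ℝ) ≤ Real.exp 1 * Real.exp (2 * k * Real.log N) := by
    refine (card_small hx0 hx1 k).trans ?_
    have c1 : (1 + (1 : ℝ) / N ^ 2) ^ Fintype.card (Sym2 (Fin N)) ≤ Real.exp 1 := by
      calc (1 + (1 : ℝ) / N ^ 2) ^ Fintype.card (Sym2 (Fin N))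
          ≤ (1 + (1 : ℝ) / N ^ 2) ^ (N ^ 2) :=
            pow_le_pow_right₀ (by linarith) (card_sym2_le N)
        _ ≤ (Real.exp (1 / N ^ 2)) ^ (N ^ 2) := by
            refine pow_le_pow_left₀ (by linarith) ?_ _
            have := Real.add_one_le_exp ((1 : ℝ) / N ^ 2)
            linarith
        _ = Real.exp 1 := by
            rw [← Real.exp_nat_mul]
            congr 1
            push_cast
            field_simp
    have c2 : ((1 : ℝ) / N ^ 2) ^ (-k) = Real.exp (2 * k * Real.log N) := by
      rw [Real.rpow_def_of_pos hx0]
      congr 1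
      rw [one_div, Real.log_inv, Real.log_pow]
      push_cast
      ring
    rw [c2]
    exact mul_le_mul_of_nonneg_right c1 (Real.exp_pos _).le
  have hR2 : (2 : ℝ) ^ Rp.card ≤ 2 ^ (2 / a) := by
    rw [← Real.rpow_natCast]
    exact Real.rpow_le_rpow_of_exponent_le (by norm_num) hRp
  exact mul_le_mul hF0 hR2 (by positivity) (by positivity)


lemma X_bound {N : ℕ} (hN : 0 < N) {a k η : ℝ} (ha : 0 < a) (hη : 0 < η) (hηN : η ≤ N)
    (ω' : Om N) :
    Ex (η / N) (fun ω'' => ind (badX a k ω' ω'')) ≤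
      (Real.exp 1 * Real.exp (2 * k * Real.log N) * 2 ^ (2 / a)) ^ 2 *
        (2 ^ k * Real.exp (-(η * a ^ 2 / 8 * N))) := by
  have hN0 : (0 : ℝ) < N := by exact_mod_cast hN
  have h0 : 0 ≤ η / N := by positivity
  have h1 : η / N ≤ 1 := by rw [div_le_one hN0]; exact hηN
  set 𝒳 := XX a k (gr ω') with hXX
  let S := (𝒳 ×ˢ 𝒳).filter (fun x => Disjoint x.1 x.2 ∧ a / 2 * N ≤ x.1.card ∧
    a / 2 * N ≤ x.2.card)
  refine (Pr_union h0 h1 S _ (fun x ω => (∀ e ∈ (∅ : Finset (Sym2 (Fin N))), ω e = true) ∧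
    (((DD x.1 x.2).filter (fun e => ω e = true)).card : ℝ) ≤ k) ?_).trans ?_
  · rintro ω ⟨X, hX, Y, hY, hd, hXc, hYc, hk⟩
    refine ⟨(X, Y), ?_, by simp, ?_⟩
    · simp only [S, Finset.mem_filter, Finset.mem_product]
      exact ⟨⟨hX, hY⟩, hd, hXc, hYc⟩
    · rw [DD_xc hd]; exact hk
  have hb : ∀ x ∈ S, Ex (η / N) (fun ω => ind ((∀ e ∈ (∅ : Finset (Sym2 (Fin N))), ω e = true) ∧
    (((DD x.1 x.2).filter (fun e => ω e = true)).card : ℝ) ≤ k)) ≤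
      2 ^ k * Real.exp (-(η * a ^ 2 / 8 * N)) := by
    intro x hx
    simp only [S, Finset.mem_filter, Finset.mem_product] at hx
    obtain ⟨_, hd, hX, hY⟩ := hx
    refine (chernoff h0 h1 (by norm_num : (0 : ℝ) < 1 / 2) (by norm_num) ∅ _
      (Finset.disjoint_empty_left _) k).trans ?_
    rw [DD_card hd]
    have e1 : (1 / 2 : ℝ) ^ (-k) = 2 ^ k := by
      rw [one_div, Real.inv_rpow (by norm_num), Real.rpow_neg (by norm_num), inv_inv]
    rw [e1]
    simp only [Finset.card_empty, pow_zero, one_mul]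
    refine mul_le_mul_of_nonneg_left ?_ (by positivity)
    calc (1 - η / N * (1 - 1 / 2)) ^ (x.1.card * x.2.card)
        ≤ (Real.exp (-(η / N / 2))) ^ (x.1.card * x.2.card) := by
          refine pow_le_pow_left₀ (by linarith) ?_ _
          have := Real.add_one_le_exp (-(η / N / 2))
          linarith
      _ = Real.exp (-((x.1.card * x.2.card : ℝ) * (η / N / 2))) := by
          rw [← Real.exp_nat_mul]
          push_cast
          ring_nf
      _ ≤ _ := by
          apply Real.exp_le_exp.mpr
          have h2 : (a / 2 * N) * (a / 2 * N) ≤ (x.1.card * x.2.card : ℝ) := by gcongr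
          have h3 := mul_le_mul_of_nonneg_right h2 (by positivity : 0 ≤ η / N / 2)
          have h4 : (a / 2 * N) * (a / 2 * N) * (η / N / 2) = η * a ^ 2 / 8 * N := by
            field_simp; ring
          linarith
  refine (Finset.sum_le_card_nsmul _ _ _ hb).trans ?_
  rw [nsmul_eq_mul]
  refine mul_le_mul_of_nonneg_right ?_ (by positivity)
  have hS : (S.card : ℝ) ≤ (𝒳.card : ℝ) ^ 2 := by
    have : S.card ≤ 𝒳.card * 𝒳.card := by
      refine (Finset.card_filter_le _ _).trans ?_
      rw [Finset.card_product]
    rw [sq]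
    exact_mod_cast this
  refine hS.trans ?_
  exact pow_le_pow_left₀ (by positivity) (card_XX hN ha _) 2

lemma cnt_bound {N : ℕ} (hN : 0 < N) {η : ℝ} (hη : 0 < η) (hηN : η ≤ N) :
    Ex (η / N) (fun ω : Om N => ind (2 * η * N < (cnt ω : ℝ))) ≤ Real.exp (-(η / 4 * N)) := by
  have hN0 : (0 : ℝ) < N := by exact_mod_cast hN
  have h0 : 0 ≤ η / N := by positivity
  have h1 : η / N ≤ 1 := by rw [div_le_one hN0]; exact hηN
  refine (upper_tail h0 h1 (2 * η * N)).trans ?_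
  have c1 : (1 + η / N) ^ Fintype.card (Sym2 (Fin N)) ≤ Real.exp (η * N) := by
    calc (1 + η / N) ^ Fintype.card (Sym2 (Fin N))
        ≤ (1 + η / N) ^ (N ^ 2) :=
          pow_le_pow_right₀ (by linarith) (card_sym2_le N)
      _ ≤ (Real.exp (η / N)) ^ (N ^ 2) := by
          refine pow_le_pow_left₀ (by linarith) ?_ _
          have := Real.add_one_le_exp (η / N)
          linarith
      _ = Real.exp (η * N) := by
          rw [← Real.exp_nat_mul]
          congr 1
          push_cast
          field_simp
  have c2 : (2 : ℝ) ^ (-(2 * η * N)) = Real.exp (-(2 * Real.log 2 * (η * N))) := by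
    rw [Real.rpow_def_of_pos (by norm_num)]
    congr 1
    ring
  rw [c2]
  refine (mul_le_mul_of_nonneg_left c1 (Real.exp_pos _).le).trans ?_
  rw [← Real.exp_add]
  apply Real.exp_le_exp.mpr
  have := Real.log_two_gt_d9
  have h3 : 0 < η * N := by positivity
  nlinarith

lemma lin_bound {N : ℕ} {β a θ τ η : ℝ} (hβ : 1 < β) (hN : β ≤ N) (ha : 0 < a) (hθ : 0 < θ)
    (hη : 0 < η) (hηβ : η ≤ 1 / 2) (hη1 : 4 * η ≤ τ) (hη2 : 2 * η ≤ θ * (a / 2))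
    (hL1 : 1 ≤ Real.log N) (hL2 : 10 / (η * a ^ 2 / 8) ≤ Real.log N) :
    Ex (β / N) (fun ω : Om N => ind (badLin a (N / Real.log N ^ 2) ω ∧ ¬ badE2 a θ τ ω)) ≤
      (Real.exp 1 * 2 ^ (2 / a)) ^ 2 * Real.exp (-(η * a ^ 2 / 16 * N)) +
        Real.exp (-(η / 4 * N)) := by
  have hN0 : (0 : ℝ) < N := by linarith
  have hN' : 0 < N := by exact_mod_cast hN0
  have hηN : η ≤ N := by linarith
  have hq0 : 0 ≤ η / N := by positivity
  have hq1 : η / N < 1 := by rw [div_lt_one hN0]; linarith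
  have hp1 : β / N ≤ 1 := by rw [div_le_one hN0]; exact hN
  have hqp : η / N ≤ β / N := by gcongr; linarith
  set p' := (β / N - η / N) / (1 - η / N) with hp'
  have hp'0 : 0 ≤ p' := div_nonneg (by linarith) (by linarith)
  have hp'1 : p' ≤ 1 := by
    rw [hp', div_le_one (by linarith)]
    linarith
  have hsp : 1 - β / N = (1 - p') * (1 - η / N) := by
    have : 1 - η / N ≠ 0 := by linarith
    rw [hp', sub_mul, div_mul_cancel₀ _ this]
    ring
  set k : ℝ := N / Real.log N ^ 2 with hk
  rw [sprinkle hsp]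
  have hB : ∀ ω' : Om N, Ex (η / N) (fun ω'' : Om N =>
      ind (badLin a k (fun e => ω' e || ω'' e) ∧ ¬ badE2 a θ τ (fun e => ω' e || ω'' e))) ≤
      (Real.exp 1 * Real.exp (2 * k * Real.log N) * 2 ^ (2 / a)) ^ 2 *
        (2 ^ k * Real.exp (-(η * a ^ 2 / 8 * N))) + Real.exp (-(η / 4 * N)) := by
    intro ω'
    refine le_trans ?_ (add_le_add (X_bound hN' ha hη hηN ω') (cnt_bound hN' hη hηN))
    rw [← Ex_add]
    refine Ex_mono hq0 hq1.le fun ω'' => ?_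
    refine ind_le (add_nonneg (ind_nonneg _) (ind_nonneg _)) ?_
    rintro ⟨hl, h2⟩
    by_cases hc : 2 * η * N < (cnt ω'' : ℝ)
    · rw [ind_true hc]
      linarith [ind_nonneg (badX a k ω' ω'')]
    · push Not at hc
      rw [ind_true (lin_det ha hN' hθ hη1 hη2 _ ω' ω'' rfl hc h2 hl)]
      linarith [ind_nonneg (2 * η * N < (cnt ω'' : ℝ))]
  refine (Ex_mono hp'0 hp'1 hB).trans ?_
  rw [Ex_const]
  refine add_le_add ?_ le_rfl
  have hL0 : 0 < Real.log N := by linarith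
  have e1 : (2 : ℝ) ^ k ≤ Real.exp k := by
    rw [Real.rpow_def_of_pos (by norm_num)]
    apply Real.exp_le_exp.mpr
    have := Real.log_two_lt_d9
    have : 0 ≤ k := by positivity
    nlinarith
  have e2 : k * Real.log N = N / Real.log N := by
    rw [hk]; field_simp
  have e3 : k ≤ N / Real.log N := by
    rw [← e2]
    have : 0 ≤ k := by positivity
    nlinarith
  have e4 : 5 * (N / Real.log N) ≤ η * a ^ 2 / 16 * N := by
    have hc : 0 < η * a ^ 2 / 8 := by positivity
    rw [div_le_iff₀ hc] at hL2
    rw [← mul_div_assoc, div_le_iff₀ hL0]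
    nlinarith
  calc (Real.exp 1 * Real.exp (2 * k * Real.log N) * 2 ^ (2 / a)) ^ 2 *
        (2 ^ k * Real.exp (-(η * a ^ 2 / 8 * N)))
      ≤ (Real.exp 1 * Real.exp (2 * k * Real.log N) * 2 ^ (2 / a)) ^ 2 *
        (Real.exp k * Real.exp (-(η * a ^ 2 / 8 * N))) := by gcongr
    _ = (Real.exp 1 * 2 ^ (2 / a)) ^ 2 * (Real.exp (2 * k * Real.log N) ^ 2 *
        (Real.exp k * Real.exp (-(η * a ^ 2 / 8 * N)))) := by ring
    _ ≤ _ := by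
      refine mul_le_mul_of_nonneg_left ?_ (by positivity)
      rw [sq, ← Real.exp_add, ← Real.exp_add, ← Real.exp_add]
      apply Real.exp_le_exp.mpr
      nlinarith

lemma noedge_bound {N : ℕ} {β : ℝ} (hβ : 1 < β) (hN : β ≤ N) :
    Ex (β / N) (fun ω : Om N => ind (gr ω = ⊥)) ≤ Real.exp (-(1 / 4 * (N - 1))) := by
  have hN0 : (0 : ℝ) < N := by linarith
  have h0 : 0 ≤ β / N := by positivity
  have h1 : β / N ≤ 1 := by rw [div_le_one hN0]; exact hN
  let D : Finset (Sym2 (Fin N)) := Finset.univ.filter (fun e => ¬ e.IsDiag)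
  have hD : D.card = N.choose 2 := by
    have := Sym2.card_subtype_not_diag (α := Fin N)
    rw [Fintype.card_fin, Fintype.card_subtype] at this
    rw [← this]
  have hD' : (D.card : ℝ) = N * (N - 1) / 2 := by
    rw [hD, Nat.cast_choose_two]
  have := chernoff h0 h1 (by norm_num : (0 : ℝ) < 1 / 2) (by norm_num) ∅ D
      (Finset.disjoint_empty_left _) 0
  refine le_trans (Ex_mono h0 h1 fun ω => ind_mono ?_) (this.trans ?_)
  · intro h
    refine ⟨by simp, ?_⟩
    have : D.filter (fun e => ω e = true) = ∅ := by
      rw [Finset.filter_eq_empty_iff]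
      intro e he
      induction e with
      | _ i j =>
        intro hω
        have hij : i ≠ j := by simpa [D] using he
        have : (gr ω).Adj i j := ⟨hij, hω⟩
        rw [h] at this
        exact this
    rw [this]
    simp
  · simp only [neg_zero, Real.rpow_zero, Finset.card_empty, pow_zero, one_mul]
    calc (1 - β / N * (1 - 1 / 2)) ^ D.card
        ≤ (Real.exp (-(β / N / 2))) ^ D.card := by
          refine pow_le_pow_left₀ (by linarith) ?_ _
          have := Real.add_one_le_exp (-(β / N / 2))
          linarith
      _ = Real.exp (-((D.card : ℝ) * (β / N / 2))) := by
          rw [← Real.exp_nat_mul]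
          ring_nf
      _ ≤ _ := by
          apply Real.exp_le_exp.mpr
          rw [hD']
          have : (N * (N - 1) / 2 : ℝ) * (β / N / 2) = β / 4 * (N - 1) := by field_simp; ring
          rw [this]
          nlinarith

lemma det_cross {N : ℕ} {a θ C : ℝ} (ω : Om N) (hL : 0 < Real.log N)
    (hθ : 1 / Real.log N ^ 2 ≤ θ) (hC : C ≤ Real.log N)
    (h1 : ¬ badE1 a θ C ω) (h2 : ¬ badLin a (N / Real.log N ^ 2) ω) (v : Fin N)
    (S : Finset (Fin N)) : S ⊆ cs (gr ω) v → 2 * S.card ≤ (cs (gr ω) v).card →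
      1 / Real.log N ^ 2 * S.card ≤ crossCount (gr ω) S := by
  set lam := 1 / Real.log N ^ 2 with hlam
  have hlam0 : 0 < lam := by positivity
  induction S using Finset.strongInduction with
  | H S ih =>
    intro hS hSc
    rcases S.eq_empty_or_nonempty with rfl | ⟨x, hx⟩
    · simp
    set G := gr ω with hG
    let Gs : SimpleGraph (Fin N) :=
      { Adj := fun i j => G.Adj i j ∧ i ∈ S ∧ j ∈ S
        symm := ⟨fun i j h => ⟨h.1.symm, h.2.2, h.2.1⟩⟩
        loopless := ⟨fun i h => G.loopless.irrefl i h.1⟩ }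
    have hGs : Gs ≤ G := fun i j h => h.1
    set X := cs Gs x with hX
    have hxX : x ∈ X := mem_cs.mpr (SimpleGraph.Reachable.refl x)
    have hXS : X ⊆ S := by
      intro y hy
      by_contra hyS
      obtain ⟨_, _, b, hb, hab⟩ := exit_edge S (mem_cs.mp hy) hx hyS
      exact hb hab.2.2
    have hXcl : ∀ i ∈ X, ∀ j ∈ S, G.Adj i j → j ∈ X := by
      intro i hi j hj hij
      rw [hX, mem_cs] at hi ⊢
      exact hi.trans (SimpleGraph.Adj.reachable (G := Gs) ⟨hij, hXS (mem_cs.mpr hi), hj⟩)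
    have hsplit : crossCount G X + crossCount G (S \ X) ≤ crossCount G S := by
      have e : xc G S Sᶜ = xc G (S \ X) Sᶜ + xc G X Sᶜ := by
        unfold xc
        rw [Finset.sum_sdiff hXS]
      rw [crossCount_eq_xc, crossCount_eq_xc, crossCount_eq_xc, e, add_comm]
      refine Nat.add_le_add (xc_mono ?_) (xc_mono ?_)
      · intro i hi j hj hij
        refine ⟨hi, ?_, hij⟩
        rw [Finset.mem_compl] at hj ⊢
        intro hjS
        apply hj
        rw [Finset.mem_sdiff] at hi ⊢
        exact ⟨hjS, fun hjX => hi.2 (hXcl j hjX i hi.1 hij.symm)⟩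
      · intro i hi j hj hij
        refine ⟨hi, ?_, hij⟩
        rw [Finset.mem_compl] at hj ⊢
        intro hjS
        exact hj (hXcl i hi j hjS hij)
    have hXc : X.card ≤ S.card := Finset.card_le_card hXS
    have hXpos : 0 < X.card := Finset.card_pos.mpr ⟨x, hxX⟩
    have hcs := Finset.card_le_card hS
    have hI := ih (S \ X) (Finset.ssubset_iff_subset_ne.mpr ⟨Finset.sdiff_subset, by
        intro h
        rw [← h] at hx
        exact (Finset.mem_sdiff.mp hx).2 hxX⟩) (Finset.sdiff_subset.trans hS) (by
        have := Finset.card_le_card (Finset.sdiff_subset : S \ X ⊆ S)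
        omega)
    have hcard : (S.card : ℝ) = (S \ X).card + X.card := by
      exact_mod_cast (Finset.card_sdiff_add_card_eq_card hXS).symm
    have hXgoal : lam * X.card ≤ crossCount G X := by
      by_cases hbig : a * N < X.card
      · by_contra hcon
        push Not at hcon
        apply h2
        refine ⟨v, X, hXS.trans hS, hbig, ?_, ?_⟩
        · have h3 : X.card ≤ (cs (gr ω) v \ X).card := by
            rw [Finset.card_sdiff_of_subset (hXS.trans hS)]
            omega
          have : (X.card : ℝ) ≤ (cs (gr ω) v \ X).card := by exact_mod_cast h3
          linarith
        · have hXN : (X.card : ℝ) ≤ N := by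
            have : X.card ≤ N := by simpa using Finset.card_le_univ X
            exact_mod_cast this
          calc (crossCount (gr ω) X : ℝ) ≤ lam * X.card := hcon.le
            _ ≤ lam * N := by gcongr
            _ = N / Real.log N ^ 2 := by rw [hlam]; ring
      · push Not at hbig
        by_cases hmid : C * Real.log N ≤ X.card
        · by_contra hcon
          push Not at hcon
          apply h1
          refine ⟨x, X.card, hmid, hbig, X, by simpa using hxX, rfl, ?_, ?_⟩
          · refine par_of_reach hGs X {x} ?_ ?_
            · intro i hi j hij
              exact hXcl i hi j hij.2.2 hij.1
            · intro i hi
              exact ⟨x, by simp, (mem_cs.mp hi).symm⟩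
          · calc (crossCount (gr ω) X : ℝ) ≤ lam * X.card := hcon.le
              _ ≤ θ * X.card := by gcongr
        · push Not at hmid
          have hpos : 1 ≤ crossCount G X := by
            have : ∃ y ∈ cs G v, y ∉ X := by
              by_contra hcon
              push Not at hcon
              have := Finset.card_le_card (show cs G v ⊆ X from hcon)
              omega
            obtain ⟨y, hy, hyX⟩ := this
            have hxy : G.Reachable x y :=
              (mem_cs.mp (hS hx)).symm.trans (mem_cs.mp hy)
            obtain ⟨i, hi, j, hj, hij⟩ := exit_edge X hxy hxX hyX
            rw [crossCount_eq_xc, xc_eq]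
            refine Finset.card_pos.mpr ⟨(i, j), ?_⟩
            simp only [Finset.mem_filter, Finset.mem_product, Finset.mem_compl]
            exact ⟨⟨hi, hj⟩, hij⟩
          have hpos' : (1 : ℝ) ≤ crossCount G X := by exact_mod_cast hpos
          refine le_trans ?_ hpos'
          have : (X.card : ℝ) ≤ Real.log N ^ 2 := by nlinarith
          rw [hlam, one_div_mul_eq_div, div_le_one (by positivity)]
          exact this
    have hs' : (crossCount G X : ℝ) + crossCount G (S \ X) ≤ crossCount G S := by
      exact_mod_cast hsplit
    rw [hcard, mul_add]
    linarith

lemma cross_induce {N : ℕ} (G : SimpleGraph (Fin N)) (s : Set (Fin N)) [Fintype s]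
    [DecidableEq s] (T : Finset s) (hs : ∀ i ∈ s, ∀ j, G.Adj i j → j ∈ s) :
    crossCount G (T.map (Function.Embedding.subtype _)) ≤ crossCount (G.induce s) T := by
  have e : crossCount (G.induce s) T =
      ((T ×ˢ Tᶜ).filter (fun x => (G.induce s).Adj x.1 x.2)).card := by
    rw [Finset.card_filter, Finset.sum_product]; rfl
  rw [e, crossCount_eq_xc, xc_eq]
  refine le_trans (Finset.card_le_card ?_) (Finset.card_image_le (f := fun x : s × s =>
    ((x.1 : Fin N), (x.2 : Fin N))))
  rintro ⟨i, j⟩ hij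
  simp only [Finset.mem_filter, Finset.mem_product, Finset.mem_map, Finset.mem_compl] at hij
  obtain ⟨⟨⟨i', hi', rfl⟩, hj⟩, hadj⟩ := hij
  have hjs : j ∈ s := hs _ i'.2 _ hadj
  rw [Finset.mem_image]
  refine ⟨(i', ⟨j, hjs⟩), ?_, rfl⟩
  simp only [Finset.mem_filter, Finset.mem_product, Finset.mem_compl]
  refine ⟨⟨hi', fun h => hj ⟨⟨j, hjs⟩, h, rfl⟩⟩, hadj⟩

lemma good_det {N : ℕ} {a θ C : ℝ} (ω : Om N) (hL : 0 < Real.log N)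
    (hθ : 1 / Real.log N ^ 2 ≤ θ) (hC : C ≤ Real.log N)
    (h1 : ¬ badE1 a θ C ω) (h2 : ¬ badLin a (N / Real.log N ^ 2) ω) (h3 : gr ω ≠ ⊥)
    (v : Fin N) (hv : ∀ w : Fin N, compCard (gr ω) w ≤ compCard (gr ω) v) :
    1 / Real.log N ^ 2 ≤ cheegerConst ((gr ω).induce {w : Fin N | (gr ω).Reachable v w}) := by
  set G := gr ω with hG
  have hcc : ∀ w, compCard G w = (cs G w).card := fun w =>
    Fintype.card_of_subtype (cs G w) (fun x => mem_cs)
  have hcard : Fintype.card {w : Fin N | G.Reachable v w} = (cs G v).card :=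
    Fintype.card_of_subtype (cs G v) (fun x => mem_cs)
  have h2le : 2 ≤ (cs G v).card := by
    obtain ⟨i, j, hij⟩ : ∃ i j, G.Adj i j := by
      by_contra hcon
      push Not at hcon
      apply h3
      ext i j
      simp [hcon i j]
    rw [← hcc v]
    refine le_trans ?_ (hv i)
    rw [hcc i]
    have : ({i, j} : Finset (Fin N)) ⊆ cs G i := by
      intro x hx
      simp only [Finset.mem_insert, Finset.mem_singleton] at hx
      rw [mem_cs]
      rcases hx with rfl | rfl
      · exact SimpleGraph.Reachable.refl _
      · exact hij.reachable
    calc 2 = ({i, j} : Finset (Fin N)).card := (Finset.card_pair hij.ne).symm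
      _ ≤ _ := Finset.card_le_card this
  unfold cheegerConst
  apply le_csInf
  · refine ⟨_, {⟨v, SimpleGraph.Reachable.refl v⟩}, Finset.singleton_nonempty _, ?_, rfl⟩
    rw [hcard]
    simpa using h2le
  · rintro r ⟨T, hT, hTc, rfl⟩
    rw [hcard] at hTc
    have hpos : (0 : ℝ) < T.card := by exact_mod_cast Finset.card_pos.mpr hT
    rw [le_div_iff₀ hpos]
    have hd := det_cross ω hL hθ hC h1 h2 v (T.map (Function.Embedding.subtype _)) (by
      intro x hx
      rw [Finset.mem_map] at hx
      obtain ⟨y, _, rfl⟩ := hx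
      exact mem_cs.mpr y.2) (by rw [Finset.card_map]; exact hTc)
    rw [Finset.card_map] at hd
    refine hd.trans ?_
    have := cross_induce G {w : Fin N | G.Reachable v w} T (by
      intro i hi j hij
      exact SimpleGraph.Reachable.trans hi hij.reachable)
    exact_mod_cast this


/-- For `β > 1`, the induced subgraph `G` on the largest connected component
of the Erdős–Rényi graph on `[N]` with parameter `β` has Cheeger constant
`Φ(G) = Ω_P(1/log² N)`: there is `c > 0` such that with probability tending to `1` as
`N → ∞`, `Φ(G) ≥ c/log² N`. -/
theorem er_giant_cheeger (β : ℝ) (hβ : 1 < β) :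
    ∃ c > (0 : ℝ),
      Tendsto
        (fun N : ℕ =>
          erProb β N (fun G =>
            ∀ v : Fin N, (∀ w : Fin N, compCard G w ≤ compCard G v) →
              c / Real.log N ^ 2 ≤ cheegerConst (G.induce {w : Fin N | G.Reachable v w})))
        atTop (nhds 1) := by
  obtain ⟨a, θ, d, ha, ha2, hθ, hd, hF⟩ := lemF hβ
  obtain ⟨τ, δ, hτ, hδ, hE2⟩ := E2_bound hβ ha ha2 hd hF
  have hE1 := E1_bound hβ ha2 hd hF
  obtain ⟨η, hη, hη0, hη1, hη2⟩ : ∃ η : ℝ, 0 < η ∧ η ≤ 1 / 2 ∧ 4 * η ≤ τ ∧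
      2 * η ≤ θ * (a / 2) := by
    refine ⟨min (1 / 2) (min (τ / 4) (θ * a / 4)), ?_, min_le_left _ _, ?_, ?_⟩
    · exact lt_min (by norm_num) (lt_min (by positivity) (by positivity))
    · have := (min_le_right (1 / 2) (min (τ / 4) (θ * a / 4))).trans (min_le_left _ _)
      linarith
    · have := (min_le_right (1 / 2) (min (τ / 4) (θ * a / 4))).trans (min_le_right _ _)
      linarith
  refine ⟨1, one_pos, ?_⟩
  set K := (Real.exp 1 * (2 : ℝ) ^ (2 / a)) ^ 2 with hK
  have hcast : Tendsto (fun N : ℕ => (N : ℝ)) atTop atTop := tendsto_natCast_atTop_atTop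
  have hlog : Tendsto (fun N : ℕ => Real.log N) atTop atTop := Real.tendsto_log_atTop.comp hcast
  have hexp : ∀ c : ℝ, 0 < c → Tendsto (fun N : ℕ => Real.exp (-(c * N))) atTop (nhds 0) := by
    intro c hc
    exact Real.tendsto_exp_neg_atTop_nhds_zero.comp (hcast.const_mul_atTop hc)
  have hT : Tendsto (fun N : ℕ => 1 - (2 / (N : ℝ) + 2 * N * Real.exp (-(δ * N)) +
      (K * Real.exp (-(η * a ^ 2 / 16 * N)) + Real.exp (-(η / 4 * N))) +
      Real.exp (-(1 / 4 * ((N : ℝ) - 1))))) atTop (nhds 1) := by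
    have t1 : Tendsto (fun N : ℕ => 2 / (N : ℝ)) atTop (nhds 0) :=
      tendsto_const_nhds.div_atTop hcast
    have t2 : Tendsto (fun N : ℕ => 2 * (N : ℝ) * Real.exp (-(δ * N))) atTop (nhds 0) := by
      have h := (Real.tendsto_pow_mul_exp_neg_atTop_nhds_zero 1).comp
        (hcast.const_mul_atTop hδ)
      have h' := h.const_mul (2 / δ)
      simp only [mul_zero] at h'
      refine h'.congr fun N => ?_
      simp only [Function.comp, pow_one]
      field_simp
    have t3 := (hexp (η * a ^ 2 / 16) (by positivity)).const_mul K
    have t4 := hexp (η / 4) (by positivity)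
    have t5 : Tendsto (fun N : ℕ => Real.exp (-(1 / 4 * ((N : ℝ) - 1)))) atTop (nhds 0) := by
      have h := (hexp (1 / 4) (by norm_num)).const_mul (Real.exp (1 / 4))
      simp only [mul_zero] at h
      refine h.congr fun N => ?_
      rw [← Real.exp_add]
      congr 1
      ring
    have := (((t1.add t2).add (t3.add t4)).add t5).const_sub 1
    simpa using this
  refine tendsto_of_tendsto_of_tendsto_of_le_of_le' hT tendsto_const_nhds ?_ ?_
  · filter_upwards [hcast.eventually_ge_atTop β, hlog.eventually_ge_atTop 1,
      hlog.eventually_ge_atTop (10 / (η * a ^ 2 / 8)), hlog.eventually_ge_atTop (3 / d),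
      hlog.eventually_ge_atTop (1 / θ)] with N hN hL1 hL2 hL3 hL4
    have hN0 : (0 : ℝ) < N := by linarith
    have h0 : 0 ≤ β / N := by positivity
    have h1 : β / N ≤ 1 := by rw [div_le_one hN0]; exact hN
    have hθL : 1 / Real.log N ^ 2 ≤ θ := by
      rw [div_le_iff₀ hθ] at hL4
      rw [div_le_iff₀ (by positivity)]
      nlinarith
    rw [erProb_eq]
    have b1 := hE1 N hN
    have b2 := hE2 N hN
    have b3 := lin_bound hβ hN ha hθ hη hη0 hη1 hη2 hL1 hL2
    have b4 := noedge_bound hβ hN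
    rw [← hK] at b3
    set A : Om N → Prop := fun ω => ∀ v : Fin N,
      (∀ w : Fin N, compCard (gr ω) w ≤ compCard (gr ω) v) →
      1 / Real.log N ^ 2 ≤ cheegerConst ((gr ω).induce {w : Fin N | (gr ω).Reachable v w}) with hA
    have key : (1 : ℝ) ≤ Ex (β / N) (fun ω => ind (A ω)) +
        (Ex (β / N) (fun ω : Om N => ind (badE1 a θ (3 / d) ω)) +
        Ex (β / N) (fun ω : Om N => ind (badE2 a θ τ ω)) +
        Ex (β / N) (fun ω : Om N => ind (badLin a (N / Real.log N ^ 2) ω ∧ ¬ badE2 a θ τ ω)) +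
        Ex (β / N) (fun ω : Om N => ind (gr ω = ⊥))) := by
      rw [← Ex_add, ← Ex_add, ← Ex_add, ← Ex_add]
      rw [← Ex_one (N := N) (β / N)]
      refine Ex_mono h0 h1 fun ω => ?_
      have i0 := ind_nonneg (A ω)
      have i1 := ind_nonneg (badE1 a θ (3 / d) ω)
      have i2 := ind_nonneg (badE2 a θ τ ω)
      have i3 := ind_nonneg (badLin a (N / Real.log N ^ 2) ω ∧ ¬ badE2 a θ τ ω)
      have i4 := ind_nonneg (gr ω = ⊥)
      by_cases c1 : badE1 a θ (3 / d) ω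
      · rw [ind_true c1]; linarith
      by_cases c2 : badE2 a θ τ ω
      · rw [ind_true c2]; linarith
      by_cases c3 : badLin a (N / Real.log N ^ 2) ω
      · rw [ind_true (And.intro c3 c2)]; linarith
      by_cases c4 : gr ω = ⊥
      · rw [ind_true c4]; linarith
      have : A ω := fun v hv =>
        good_det ω (by linarith) hθL hL3 c1 c3 c4 v hv
      rw [ind_true this]; linarith
    linarith
  · filter_upwards [hcast.eventually_ge_atTop β] with N hN
    have hN0 : (0 : ℝ) < N := by linarith
    have h0 : 0 ≤ β / N := by positivity
    have h1 : β / N ≤ 1 := by rw [div_le_one hN0]; exact hN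
    rw [erProb_eq, ← Ex_one (N := N) (β / N)]
    exact Ex_mono h0 h1 fun ω => ind_le_one _
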